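/- Let G ↷ (X, μ) be a pmp action of a countable group, let F be a G-invariant sub-σ-algebra, and let (B_n)_{n∈ℕ} be an increasing sequence of G-invariant sub-σ-algebras with ⋁_{n∈ℕ} B_n = Borel(X) modulo μ-null sets. Then rh_G(X, μ | F) < ∞ if and only if both: inf_n sup_{m≥n} rh_{G,μ}(B_m | B_n ∨ F) = 0, and rh_{G,μ}(B_m | F) < ∞ for every m. Furthermore, when rh_G(X, μ | F) < ∞, one has rh_G(X, μ | F) = sup_m rh_{G,μ}(B_m | F). -/

import Mathlib

open MeasureTheory Set Function
open scoped ENNReal symmDiff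

/-- A set in a measurable space is *analytic* if it is the image of a Borel subset of a
standard Borel space under a Borel (measurable) map. -/
def IsAnalyticS {W : Type*} [MeasurableSpace W] (A : Set W) : Prop :=
  ∃ (Z : Type) (mZ : MeasurableSpace Z), @StandardBorelSpace Z mZ ∧
    ∃ (B : Set Z) (f : Z → W), MeasurableSet[mZ] B ∧ @Measurable Z W mZ _ f ∧ f '' B = A

/-- The smallest `G`-invariant sub-σ-algebra containing the collection `ξ`. -/
def sigmaG (G : Type*) {X : Type*} [Group G] [MulAction G X] (ξ : Set (Set X)) :
    MeasurableSpace X :=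
  MeasurableSpace.generateFrom {B | ∃ (g : G), ∃ A ∈ ξ, B = (fun x => g • x) ⁻¹' A}

/-- The σ-algebra of `G`-invariant measurable sets. -/
def invSigma (G X : Type*) [Group G] [MulAction G X] [MeasurableSpace X] :
    MeasurableSpace X :=
  MeasurableSpace.generateFrom {A | MeasurableSet A ∧ ∀ g : G, (fun x => g • x) ⁻¹' A = A}

/-- Conditional Shannon entropy `H_μ(α | m)` of a countable partition `α` given a
sub-σ-algebra `m`, valued in `[0,∞]`. -/
noncomputable def condEnt {X : Type*} (m : MeasurableSpace X) [mX : MeasurableSpace X]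
    (μ : Measure X) {ι : Type*} (α : ι → Set X) : ℝ≥0∞ :=
  ∫⁻ x, ∑' i, ENNReal.ofReal
    (Real.negMulLog ((μ[(α i).indicator (fun _ => (1 : ℝ)) | m]) x)) ∂μ

/-- Shannon entropy `H_μ(α)` of a countable partition. -/
noncomputable def shEnt {X : Type*} [MeasurableSpace X] (μ : Measure X)
    {ι : Type*} (α : ι → Set X) : ℝ≥0∞ :=
  ∑' i, ENNReal.ofReal (Real.negMulLog (μ (α i)).toReal)

/-- `α` is a countable Borel partition of `X` (indexed by `ℕ`, cells may be empty). -/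
def IsPartition {X : Type*} [MeasurableSpace X] (α : ℕ → Set X) : Prop :=
  (∀ i, MeasurableSet (α i)) ∧ Pairwise (Function.onFun Disjoint α) ∧ (⋃ i, α i) = univ

/-- Every set of `ξ` agrees with an `m`-measurable set modulo `μ`-null sets. -/
def SubsetMod {X : Type*} (m : MeasurableSpace X) [mX : MeasurableSpace X] (μ : Measure X)
    (ξ : Set (Set X)) : Prop :=
  ∀ A ∈ ξ, ∃ B, MeasurableSet[m] B ∧ μ (A ∆ B) = 0

/-- Outer Rokhlin entropy `rh_{G,μ}(ξ | F)`. -/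
noncomputable def outerRokhlin (G : Type*) {X : Type*} (ξ : Set (Set X))
    (F : MeasurableSpace X) [Group G] [MulAction G X] [mX : MeasurableSpace X]
    (μ : Measure X) : ℝ≥0∞ :=
  sInf { h | ∃ α : ℕ → Set X, IsPartition α ∧
      SubsetMod (sigmaG G (Set.range α) ⊔ F ⊔ invSigma G X) μ ξ ∧
      h = condEnt (F ⊔ invSigma G X) μ α }

/-- Rokhlin entropy `rh_G(X, μ | F)`. -/
noncomputable def rokhlin (G : Type*) {X : Type*} (F : MeasurableSpace X) [Group G]
    [MulAction G X] [mX : MeasurableSpace X] (μ : Measure X) : ℝ≥0∞ :=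
  outerRokhlin G {A | MeasurableSet A} F μ

/-- Outer Rokhlin entropy `rh_{G,μ}(S | F)` of a sub-σ-algebra `S`. -/
noncomputable def outerRokhlinAlg (G : Type*) {X : Type*} (S F : MeasurableSpace X) [Group G]
    [MulAction G X] [mX : MeasurableSpace X] (μ : Measure X) : ℝ≥0∞ :=
  outerRokhlin G {A | MeasurableSet[S] A} F μ

/-- The action of `G` on `(X, μ)` is probability-measure-preserving. -/
def IsPmp (G : Type*) {X : Type*} [Group G] [MulAction G X] [MeasurableSpace X]
    (μ : Measure X) : Prop :=
  ∀ g : G, MeasurePreserving (fun x => g • x) μ μ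

/-- Aperiodicity: μ-almost-every `G`-orbit is infinite. -/
def Aperiodic (G : Type*) {X : Type*} [Group G] [MulAction G X] [MeasurableSpace X]
    (μ : Measure X) : Prop :=
  ∀ᵐ x ∂μ, (MulAction.orbit G x).Infinite

/-- Ergodicity of a measure: every invariant Borel set is null or conull. -/
def IsErgodicInv (G : Type*) {X : Type*} [Group G] [MulAction G X] [MeasurableSpace X]
    (ν : Measure X) : Prop :=
  ∀ A : Set X, MeasurableSet A → (∀ g : G, (fun x => g • x) ⁻¹' A = A) → ν A = 0 ∨ ν A = 1

/-- `F` is a `G`-invariant σ-algebra. -/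
def InvariantAlg (G : Type*) {X : Type*} (F : MeasurableSpace X) [Group G] [MulAction G X] :
    Prop :=
  ∀ (g : G) (A : Set X), MeasurableSet[F] A → MeasurableSet[F] ((fun x => g • x) ⁻¹' A)

/-- `F` is countably generated. -/
def CountablyGen {X : Type*} (F : MeasurableSpace X) : Prop :=
  ∃ S : Set (Set X), S.Countable ∧ F = MeasurableSpace.generateFrom S

/-- `π` is an ergodic decomposition map for `μ`. -/
def IsErgDecomp (G : Type*) {X : Type*} [Group G] [MulAction G X] [MeasurableSpace X]
    (μ : Measure X) (π : X → Measure X) : Prop :=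
  Measurable π ∧
  (∀ x, IsProbabilityMeasure (π x) ∧ IsPmp G (π x) ∧ IsErgodicInv G (π x)) ∧
  (∀ (g : G) (x : X), π (g • x) = π x) ∧
  (∀ ν : Measure X, IsProbabilityMeasure ν → IsPmp G ν → IsErgodicInv G ν →
      ν {x | π x = ν} = 1) ∧
  (∀ B : Set X, MeasurableSet B → μ B = ∫⁻ x, π x B ∂μ)

/-!
Countable partitions are treated as labels `X → ℕ`, and their entropies are compared with mean code
lengths. Ranking the values of a label by decreasing conditional probability replaces it by a label
`r`, from which it can be recovered, with `∫ log (1 + r)` at most its conditional entropy. In the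
other direction, Gibbs' inequality for the weights `(1 + n) ^ (-s)` shows that adjoining a label `r`
to a given one raises the conditional entropy by at most `s ∫ log (1 + r) + δ s`, where `δ s → 0`
as `s → ∞`.

If the Rokhlin entropy over `F` is finite, it is witnessed by a generating label `r` with
`∫ log (1 + r) < ∞`. By martingale convergence, dominated by code lengths, the entropy of `r` given
`B n ∨ F` tends to `0`. Hence `X` is generated over `B n ∨ F` by a label of small cost, and
adjoining it to a nearly optimal label for `B n` gives the formula.

Conversely, choose `n k` such that every `B m` with `m ≥ n k` is cheap over `B (n k) ∨ F`, and let
`r k` generate `B (k + n k + n (k + 1))` over `B (n k) ∨ F`. If the costs decay fast enough, almost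
every point has only finitely many nonzero labels `r k`, so nested pairing packs them all into a
single label of finite cost. Together with a label for `B (n 0)` it generates every `B m`.
-/

open Filter Topology
open scoped NNReal

section CodeLengths

/-- The code length `log (1 + n)` of a natural number, in nats. -/
noncomputable def logCost (n : ℕ) : ℝ≥0 := Real.toNNReal (Real.log (1 + n))

/-- The Kraft sum `∑ exp (-ℓ j)` of a code length function `ℓ`. -/
noncomputable def kraftSum {κ : Type*} (ℓ : κ → ℝ≥0) : ℝ≥0∞ :=
  ∑' j, ENNReal.ofReal (Real.exp (-ℓ j))

lemma coe_logCost (n : ℕ) : (logCost n : ℝ) = Real.log (1 + n) :=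
  Real.coe_toNNReal _ (Real.log_nonneg (by simp))

lemma logCost_zero : logCost 0 = 0 := by simp [logCost]

lemma exp_neg_mul_logCost (s n : ℕ) :
    Real.exp (-(s * logCost n : ℝ≥0)) = ((1 + n : ℝ) ^ s)⁻¹ := by
  have hn : (0 : ℝ) < 1 + n := by positivity
  push_cast
  rw [coe_logCost, Real.exp_neg, ← Real.log_pow, Real.exp_log (pow_pos hn s)]

lemma summable_inv_one_add_sq : Summable fun n : ℕ => ((1 + n : ℝ) ^ 2)⁻¹ := by
  simpa [add_comm] using (summable_nat_add_iff 1).mpr (Real.summable_nat_pow_inv.mpr one_lt_two)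

lemma tendsto_tsum_inv_one_add_pow :
    Tendsto (fun s : ℕ => ∑' n : ℕ, ((1 + n : ℝ) ^ s)⁻¹) atTop (𝓝 1) := by
  have hterm (n : ℕ) :
      Tendsto (fun s : ℕ => ((1 + n : ℝ) ^ s)⁻¹) atTop (𝓝 (if n = 0 then 1 else 0)) := by
    split_ifs with hn
    · simp [hn]
    · have : (1 : ℝ) < 1 + n := by simpa using Nat.pos_of_ne_zero hn
      exact (tendsto_pow_atTop_atTop_of_one_lt this).inv_tendsto_atTop
  have hbound : ∀ᶠ s : ℕ in atTop, ∀ n : ℕ, ‖((1 + n : ℝ) ^ s)⁻¹‖ ≤ ((1 + n : ℝ) ^ 2)⁻¹ := by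
    filter_upwards [eventually_ge_atTop 2] with s hs n
    rw [Real.norm_of_nonneg (by positivity)]
    gcongr
    simp
  simpa using tendsto_tsum_of_dominated_convergence summable_inv_one_add_sq hterm hbound

lemma tendsto_kraftSum_mul_logCost :
    Tendsto (fun s : ℕ => kraftSum fun n => s * logCost n) atTop (𝓝 1) := by
  have hreal : ∀ᶠ s : ℕ in atTop,
      ENNReal.ofReal (∑' n : ℕ, ((1 + n : ℝ) ^ s)⁻¹) = kraftSum fun n => s * logCost n := by
    filter_upwards [eventually_ge_atTop 2] with s hs
    simp only [kraftSum, exp_neg_mul_logCost]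
    refine ENNReal.ofReal_tsum_of_nonneg (fun n => by positivity) ?_
    refine summable_inv_one_add_sq.of_nonneg_of_le (fun n => by positivity) fun n => ?_
    gcongr
    simp
  simpa using (ENNReal.tendsto_ofReal tendsto_tsum_inv_one_add_pow).congr' hreal

lemma exists_kraftSum_mul_logCost_le {ε : ℝ≥0∞} (hε : ε ≠ 0) :
    ∃ s : ℕ, kraftSum (fun n => s * logCost n) ≤ 1 + ε :=
  (tendsto_kraftSum_mul_logCost.eventually_le_const
    (ENNReal.lt_add_right ENNReal.one_ne_top hε)).exists

lemma logCost_pair_le (a b : ℕ) : logCost (Nat.pair a b) ≤ 2 * logCost a + 2 * logCost b := by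
  have hpair : 1 + Nat.pair a b ≤ ((1 + a) * (1 + b)) ^ 2 := by
    have hmax : max a b + 1 ≤ (1 + a) * (1 + b) := by
      rcases max_choice a b with h | h <;> rw [h] <;> nlinarith
    linarith [Nat.pair_lt_max_add_one_sq a b, Nat.pow_le_pow_left hmax 2]
  rw [← NNReal.coe_le_coe]
  push_cast [coe_logCost]
  calc Real.log (1 + Nat.pair a b) ≤ Real.log (((1 + a) * (1 + b)) ^ 2) :=
        Real.log_le_log (by positivity) (by exact_mod_cast hpair)
    _ = 2 * Real.log (1 + a) + 2 * Real.log (1 + b) := by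
        rw [Real.log_pow, Real.log_mul (by positivity) (by positivity)]
        push_cast
        ring

end CodeLengths

section EntropyTerm

/-- The summand `-p log p` of the Shannon entropy, for an extended nonnegative `p ≤ 1`. -/
noncomputable def entropyTerm (p : ℝ≥0∞) : ℝ≥0∞ := ENNReal.ofReal (Real.negMulLog p.toReal)

/-- The information `-log p` of an event of probability `p ≤ 1`. The value at `p = 0` is `0`. -/
noncomputable def selfInfo (p : ℝ≥0∞) : ℝ≥0∞ := ENNReal.ofReal (-Real.log p.toReal)

lemma measurable_entropyTerm : Measurable entropyTerm := by
  unfold entropyTerm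
  fun_prop

lemma measurable_selfInfo : Measurable selfInfo := by
  unfold selfInfo
  fun_prop

lemma entropyTerm_eq_mul_selfInfo {p : ℝ≥0∞} (hp : p ≤ 1) : entropyTerm p = p * selfInfo p := by
  have hp_top : p ≠ ⊤ := ne_top_of_le_ne_top ENNReal.one_ne_top hp
  rw [entropyTerm, selfInfo, Real.negMulLog, neg_mul, ← mul_neg,
    ENNReal.ofReal_mul ENNReal.toReal_nonneg, ENNReal.ofReal_toReal hp_top]

lemma negMulLog_add_le {p a ℓ : ℝ} (hp : 0 ≤ p) (hpa : p ≤ a) :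
    Real.negMulLog p + p ≤ p * -Real.log a + p * ℓ + a * Real.exp (-ℓ) := by
  rcases hp.eq_or_lt with rfl | hp
  · simpa using by positivity
  have ha : 0 < a := hp.trans_le hpa
  have hexp : Real.exp (Real.log a - Real.log p - ℓ) = a / p * Real.exp (-ℓ) := by
    rw [sub_eq_add_neg, Real.exp_add, Real.exp_sub, Real.exp_log ha, Real.exp_log hp]
  have hmul := mul_le_mul_of_nonneg_left (Real.add_one_le_exp (Real.log a - Real.log p - ℓ)) hp.le
  rw [hexp, ← mul_assoc, mul_div_cancel₀ _ hp.ne'] at hmul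
  rw [Real.negMulLog]
  linarith

lemma entropyTerm_add_le {p a : ℝ≥0∞} (ℓ : ℝ≥0) (hpa : p ≤ a) (ha : a ≤ 1) :
    entropyTerm p + p ≤ p * selfInfo a + p * ℓ + a * ENNReal.ofReal (Real.exp (-ℓ)) := by
  have ha_top : a ≠ ⊤ := ne_top_of_le_ne_top ENNReal.one_ne_top ha
  lift a to ℝ≥0 using ha_top
  lift p to ℝ≥0 using ne_top_of_le_ne_top ENNReal.coe_ne_top hpa
  have hp1 : (p : ℝ) ≤ 1 := by exact_mod_cast hpa.trans ha
  have ha1 : (a : ℝ) ≤ 1 := by exact_mod_cast ha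
  have hlog : 0 ≤ -Real.log a := neg_nonneg.mpr (Real.log_nonpos a.coe_nonneg ha1)
  have hnml : 0 ≤ Real.negMulLog p := Real.negMulLog_nonneg p.coe_nonneg hp1
  have hreal := negMulLog_add_le (ℓ := ℓ) p.coe_nonneg
    (NNReal.coe_le_coe.mpr (ENNReal.coe_le_coe.mp hpa))
  simp only [entropyTerm, selfInfo, ENNReal.coe_toReal]
  rw [← ENNReal.ofReal_coe_nnreal (p := p), ← ENNReal.ofReal_coe_nnreal (p := a),
    ← ENNReal.ofReal_coe_nnreal (p := ℓ), ← ENNReal.ofReal_mul p.coe_nonneg,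
    ← ENNReal.ofReal_mul p.coe_nonneg, ← ENNReal.ofReal_mul a.coe_nonneg,
    ← ENNReal.ofReal_add hnml p.coe_nonneg, ← ENNReal.ofReal_add (by positivity) (by positivity),
    ← ENNReal.ofReal_add (by positivity) (by positivity)]
  exact ENNReal.ofReal_le_ofReal hreal

lemma entropyTerm_le_one {p : ℝ≥0∞} (hp : p ≤ 1) : entropyTerm p ≤ 1 := by
  simpa [selfInfo] using le_self_add.trans (entropyTerm_add_le 0 hp le_rfl)

/-- The `+ 1` compensates the main part of `kraftSum ℓ`; it stands on the left because subtraction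
in `ℝ≥0∞` truncates. -/
lemma tsum_entropyTerm_add_one_le {ι κ : Type*} (q : ι → κ → ℝ≥0∞) (hq : ∑' i, ∑' j, q i j = 1)
    (ℓ : κ → ℝ≥0) :
    ∑' i, ∑' j, entropyTerm (q i j) + 1 ≤
      ∑' i, entropyTerm (∑' j, q i j) + ∑' i, ∑' j, q i j * ℓ j + kraftSum ℓ := by
  have hrow (i : ι) : ∑' j, q i j ≤ 1 := hq ▸ ENNReal.le_tsum i
  have hi (i : ι) : ∑' j, entropyTerm (q i j) + ∑' j, q i j ≤
      entropyTerm (∑' j, q i j) + ∑' j, q i j * ℓ j + (∑' j, q i j) * kraftSum ℓ := by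
    rw [entropyTerm_eq_mul_selfInfo (hrow i), ← ENNReal.tsum_mul_right, kraftSum,
      ← ENNReal.tsum_mul_left, ← ENNReal.tsum_add, ← ENNReal.tsum_add, ← ENNReal.tsum_add]
    exact ENNReal.tsum_le_tsum fun j => entropyTerm_add_le (ℓ j) (ENNReal.le_tsum j) (hrow i)
  calc ∑' i, ∑' j, entropyTerm (q i j) + 1
      = ∑' i, (∑' j, entropyTerm (q i j) + ∑' j, q i j) := by rw [ENNReal.tsum_add, hq]
    _ ≤ ∑' i, (entropyTerm (∑' j, q i j) + ∑' j, q i j * ℓ j + (∑' j, q i j) * kraftSum ℓ) :=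
        ENNReal.tsum_le_tsum hi
    _ = _ := by rw [ENNReal.tsum_add, ENNReal.tsum_add, ENNReal.tsum_mul_right, hq, one_mul]

end EntropyTerm

section Rank

/-- The indices preceding `i` when `ℕ` is sorted by decreasing weight `q`, ties being broken in
favour of the smaller index. -/
def heavier (q : ℕ → ℝ≥0∞) (i : ℕ) : Set ℕ := {j | q i < q j ∨ (q j = q i ∧ j < i)}

/-- The position of `i` when `ℕ` is sorted by decreasing weight `q`. It is meaningful only if
`q i ≠ 0` and `q` is summable, which makes `heavier q i` finite. -/
noncomputable def rank (q : ℕ → ℝ≥0∞) (i : ℕ) : ℕ := (heavier q i).ncard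

variable {q : ℕ → ℝ≥0∞} {i j : ℕ}

lemma le_of_mem_heavier (h : j ∈ heavier q i) : q i ≤ q j := h.elim le_of_lt fun h => h.1.ge

lemma notMem_heavier_self : i ∉ heavier q i := by simp [heavier]

lemma finite_heavier (hq : ∑' j, q j ≠ ⊤) (hi : q i ≠ 0) : (heavier q i).Finite :=
  (ENNReal.finite_const_le_of_tsum_ne_top hq hi).subset fun _ => le_of_mem_heavier

lemma heavier_ssubset (h : i ∈ heavier q j) : heavier q i ⊂ heavier q j := by
  refine ssubset_of_subset_not_subset (fun k hk => ?_) fun hsub => notMem_heavier_self (hsub h)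
  simp only [heavier, mem_ofPred_eq] at h hk ⊢
  grind

lemma mem_heavier_or_mem_heavier (hij : i ≠ j) : i ∈ heavier q j ∨ j ∈ heavier q i := by
  simp only [heavier, mem_ofPred_eq]
  grind

lemma injOn_rank (hq : ∑' j, q j ≠ ⊤) : InjOn (rank q) {i | q i ≠ 0} := by
  intro i hi j hj hrank
  by_contra hij
  rcases mem_heavier_or_mem_heavier (q := q) hij with h | h
  · exact (ncard_lt_ncard (heavier_ssubset h) (finite_heavier hq hj)).ne hrank
  · exact (ncard_lt_ncard (heavier_ssubset h) (finite_heavier hq hi)).ne' hrank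

lemma rank_add_one_mul_le_tsum (hq : ∑' j, q j ≠ ⊤) (i : ℕ) :
    (rank q i + 1 : ℕ) * q i ≤ ∑' j, q j := by
  by_cases hi : q i = 0
  · simp [hi]
  have hfin := finite_heavier hq hi
  calc (rank q i + 1 : ℕ) * q i
      = ∑ _ ∈ insert i hfin.toFinset, q i := by
        rw [Finset.sum_const, Finset.card_insert_of_notMem (by simp [notMem_heavier_self]),
          ← ncard_eq_toFinset_card _ hfin, nsmul_eq_mul, rank]
    _ ≤ ∑ j ∈ insert i hfin.toFinset, q j := by
        refine Finset.sum_le_sum fun j hj => ?_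
        obtain rfl | hj := Finset.mem_insert.mp hj
        · exact le_rfl
        · exact le_of_mem_heavier (hfin.mem_toFinset.mp hj)
    _ ≤ ∑' j, q j := ENNReal.sum_le_tsum _

lemma logCost_rank_le (hq : ∑' j, q j = 1) (hi : q i ≠ 0) :
    (logCost (rank q i) : ℝ≥0∞) ≤ selfInfo (q i) := by
  have hle := hq ▸ rank_add_one_mul_le_tsum (hq ▸ ENNReal.one_ne_top) i
  have hq_le : q i ≤ 1 := hq ▸ ENNReal.le_tsum i
  have hpos : 0 < (q i).toReal :=
    ENNReal.toReal_pos hi (ne_top_of_le_ne_top ENNReal.one_ne_top hq_le)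
  have hreal : (1 + rank q i : ℝ) * (q i).toReal ≤ 1 := by
    simpa [ENNReal.toReal_add, add_comm] using ENNReal.toReal_mono ENNReal.one_ne_top hle
  rw [selfInfo, logCost, ← ENNReal.ofReal, ← Real.log_inv]
  refine ENNReal.ofReal_le_ofReal (Real.log_le_log (by positivity) ?_)
  rwa [le_inv_comm₀ (by positivity) hpos, ← one_div, le_div_iff₀' (by positivity)]

lemma measurable_rank (i : ℕ) : Measurable fun q : ℕ → ℝ≥0∞ => rank q i := by
  refine measurable_ncard.comp (measurable_set_iff.mpr fun j => ?_)
  have hi : Measurable fun q : ℕ → ℝ≥0∞ => q i := measurable_pi_apply i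
  have hj : Measurable fun q : ℕ → ℝ≥0∞ => q j := measurable_pi_apply j
  exact (hi.lt hj).or ((hj.eq hi).and measurable_const)

end Rank

section CondProb

/-- The conditional probability of the event `A` given the sub-σ-algebra `m`. -/
noncomputable def condProb {X : Type*} (m : MeasurableSpace X) {_ : MeasurableSpace X}
    (μ : Measure X) (A : Set X) : X → ℝ≥0∞ :=
  μ⁻[A.indicator 1 | m]

variable {X : Type*} {m mX : MeasurableSpace X} {μ : Measure X}

lemma measurable_condProb (A : Set X) : Measurable[m] (condProb m μ A) :=
  measurable_condLExp _ _ _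

lemma measurable_condProb' (A : Set X) : Measurable (condProb m μ A) :=
  measurable_condLExp' _ _ _

lemma toReal_condProb [IsFiniteMeasure μ] {A : Set X} (hA : MeasurableSet A) :
    (fun x => (condProb m μ A x).toReal) =ᵐ[μ] μ[A.indicator fun _ => (1 : ℝ) | m] := by
  have hint : ∫⁻ x, A.indicator 1 x ∂μ ≠ ⊤ := by simp [lintegral_indicator_one hA]
  convert! toReal_condLExp m (measurable_one.indicator hA).aemeasurable hint using 2
  ext x
  by_cases hx : x ∈ A <;> simp [hx]

lemma lintegral_condLExp_mul [IsFiniteMeasure μ] (hm : m ≤ mX) {f g : X → ℝ≥0∞}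
    (hf : Measurable f) (hg : Measurable[m] g) :
    ∫⁻ x, μ⁻[f | m] x * g x ∂μ = ∫⁻ x, f x * g x ∂μ := by
  have htrim : (μ.withDensity μ⁻[f | m]).trim hm = (μ.withDensity f).trim hm := by
    refine @Measure.ext _ m _ _ fun s hs => ?_
    rw [trim_measurableSet_eq hm hs, trim_measurableSet_eq hm hs, withDensity_apply _ (hm s hs),
      withDensity_apply _ (hm s hs), setLIntegral_condLExp hm μ f hs]
  have hg' : Measurable g := hg.mono hm le_rfl
  calc ∫⁻ x, μ⁻[f | m] x * g x ∂μ
      = ∫⁻ x, g x ∂(μ.withDensity μ⁻[f | m]) :=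
        (lintegral_withDensity_eq_lintegral_mul _ (measurable_condLExp' _ _ _) hg').symm
    _ = ∫⁻ x, g x ∂(μ.withDensity f) := by
        rw [← lintegral_trim hm hg, htrim, lintegral_trim hm hg]
    _ = ∫⁻ x, f x * g x ∂μ := lintegral_withDensity_eq_lintegral_mul _ hf hg'

lemma lintegral_condProb_mul [IsFiniteMeasure μ] (hm : m ≤ mX) {A : Set X} (hA : MeasurableSet A)
    {g : X → ℝ≥0∞} (hg : Measurable[m] g) :
    ∫⁻ x, condProb m μ A x * g x ∂μ = ∫⁻ x in A, g x ∂μ := by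
  rw [condProb, lintegral_condLExp_mul hm (measurable_one.indicator hA) hg,
    ← lintegral_indicator hA]
  exact lintegral_congr fun x => by by_cases hx : x ∈ A <;> simp [hx]

lemma setLIntegral_condProb [IsFiniteMeasure μ] (hm : m ≤ mX) {A s : Set X}
    (hA : MeasurableSet A) (hs : MeasurableSet[m] s) :
    ∫⁻ x in s, condProb m μ A x ∂μ = μ (A ∩ s) := by
  rw [condProb, setLIntegral_condLExp hm μ _ hs, lintegral_indicator_one hA,
    Measure.restrict_apply hA]

lemma lintegral_condProb [IsFiniteMeasure μ] (hm : m ≤ mX) {A : Set X} (hA : MeasurableSet A) :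
    ∫⁻ x, condProb m μ A x ∂μ = μ A := by
  simpa using setLIntegral_condProb hm hA MeasurableSet.univ

lemma condProb_ne_zero_of_mem [IsFiniteMeasure μ] (hm : m ≤ mX) {A : Set X}
    (hA : MeasurableSet A) : ∀ᵐ x ∂μ, x ∈ A → condProb m μ A x ≠ 0 := by
  have hs : MeasurableSet[m] {x | condProb m μ A x = 0} :=
    measurable_condProb A (measurableSet_singleton 0)
  have hnull : μ (A ∩ {x | condProb m μ A x = 0}) = 0 := by
    rw [← setLIntegral_condProb hm hA hs, setLIntegral_congr_fun (hm _ hs) fun x hx => hx]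
    simp
  filter_upwards [measure_eq_zero_iff_ae_notMem.mp hnull] with x hx hxA hx0
  exact hx ⟨hxA, hx0⟩

lemma condProb_univ [IsFiniteMeasure μ] (hm : m ≤ mX) : condProb m μ univ = 1 := by
  rw [condProb, indicator_univ, condLExp_one hm]

lemma condProb_le_one [IsFiniteMeasure μ] (hm : m ≤ mX) (A : Set X) :
    ∀ᵐ x ∂μ, condProb m μ A x ≤ 1 := by
  have hle : A.indicator 1 ≤ᵐ[μ] (1 : X → ℝ≥0∞) := .of_forall (indicator_le_self' (by simp))
  filter_upwards [condLExp_mono (mΩ := m) hle] with x hx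
  rwa [condLExp_one hm] at hx

variable {ι κ : Type*} [Countable ι] [MeasurableSpace ι] [MeasurableSingletonClass ι]
  [Countable κ] [MeasurableSpace κ] [MeasurableSingletonClass κ] {b : X → ι} {r : X → κ}

lemma tsum_condProb_inter_preimage (hr : Measurable r) {A : Set X} (hA : MeasurableSet A) :
    ∀ᵐ x ∂μ, ∑' j, condProb m μ (A ∩ r ⁻¹' {j}) x = condProb m μ A x := by
  have hmeas (j : κ) : MeasurableSet (A ∩ r ⁻¹' {j}) := hA.inter (hr (measurableSet_singleton j))
  have hsum : ∑' j, (A ∩ r ⁻¹' {j}).indicator (1 : X → ℝ≥0∞) = A.indicator 1 := by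
    ext x
    rw [ENNReal.tsum_apply, tsum_eq_single (r x) fun j hj => by simp [hj.symm]]
    by_cases hx : x ∈ A <;> simp [hx]
  filter_upwards [condLExp_tsum m (P := μ) fun j =>
    (measurable_one.indicator (hmeas j)).aemeasurable] with x hx
  rw [hsum, ENNReal.tsum_apply] at hx
  exact hx.symm

lemma tsum_condProb_preimage [IsFiniteMeasure μ] (hm : m ≤ mX) (hb : Measurable b) :
    ∀ᵐ x ∂μ, ∑' i, condProb m μ (b ⁻¹' {i}) x = 1 := by
  simpa [condProb_univ hm] using
    tsum_condProb_inter_preimage (m := m) (μ := μ) hb MeasurableSet.univ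

lemma lintegral_eq_tsum_setLIntegral_preimage (hb : Measurable b) (f : ι → X → ℝ≥0∞) :
    ∫⁻ x, f (b x) x ∂μ = ∑' i, ∫⁻ x in b ⁻¹' {i}, f i x ∂μ := by
  have hmeas (i : ι) : MeasurableSet (b ⁻¹' {i}) := hb (measurableSet_singleton i)
  rw [← setLIntegral_univ, ← preimage_univ (f := b), ← iUnion_of_singleton ι,
    preimage_iUnion, lintegral_iUnion hmeas (pairwise_disjoint_fiber b)]
  exact tsum_congr fun i => setLIntegral_congr_fun (hmeas i) fun x hx => by rw [hx]

lemma condProb_preimage_apply_ne_zero [IsFiniteMeasure μ] (hm : m ≤ mX)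
    (hb : Measurable b) :
    ∀ᵐ x ∂μ, condProb m μ (b ⁻¹' {b x}) x ≠ 0 := by
  filter_upwards [ae_all_iff.mpr fun i =>
    condProb_ne_zero_of_mem hm (hb (measurableSet_singleton i))] with x hx
  exact hx (b x) rfl

end CondProb

section LabelEnt

/-- The conditional Shannon entropy of a countable partition, presented as the fibers of a
labelling `r`. -/
noncomputable def labelEnt {X ι : Type*} (m : MeasurableSpace X) {_ : MeasurableSpace X}
    (μ : Measure X) (r : X → ι) : ℝ≥0∞ :=
  condEnt m μ fun i => r ⁻¹' {i}

variable {X : Type*} {m mX : MeasurableSpace X} {μ : Measure X}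
  {ι κ : Type*}

lemma labelEnt_equiv_comp (e : ι ≃ κ) (b : X → ι) :
    labelEnt m μ (fun x => e (b x)) = labelEnt m μ b := by
  refine lintegral_congr fun x => ?_
  rw [← e.tsum_eq]
  have hfiber (i : ι) : (fun x => e (b x)) ⁻¹' {e i} = b ⁻¹' {i} := by ext; simp
  simp only [hfiber]

variable [IsProbabilityMeasure μ] [Countable ι] [MeasurableSpace ι] [MeasurableSingletonClass ι]
  [Countable κ] [MeasurableSpace κ] [MeasurableSingletonClass κ] {b : X → ι} {r : X → κ}

lemma labelEnt_eq_lintegral_tsum (hb : Measurable b) :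
    labelEnt m μ b = ∫⁻ x, ∑' i, entropyTerm (condProb m μ (b ⁻¹' {i}) x) ∂μ := by
  refine lintegral_congr_ae ?_
  filter_upwards [ae_all_iff.mpr fun i =>
    toReal_condProb (m := m) (μ := μ) (hb (measurableSet_singleton i))] with x hx
  simp only [entropyTerm, hx]

lemma labelEnt_eq_tsum_lintegral (hb : Measurable b) :
    labelEnt m μ b = ∑' i, ∫⁻ x, entropyTerm (condProb m μ (b ⁻¹' {i}) x) ∂μ := by
  rw [labelEnt_eq_lintegral_tsum hb]
  exact lintegral_tsum fun i => (measurable_entropyTerm.comp (measurable_condProb' _)).aemeasurable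

lemma labelEnt_eq_lintegral_selfInfo (hm : m ≤ mX) (hb : Measurable b) :
    labelEnt m μ b = ∫⁻ x, selfInfo (condProb m μ (b ⁻¹' {b x}) x) ∂μ := by
  rw [labelEnt_eq_tsum_lintegral hb,
    lintegral_eq_tsum_setLIntegral_preimage hb fun i x => selfInfo (condProb m μ (b ⁻¹' {i}) x)]
  refine tsum_congr fun i => ?_
  refine Eq.trans (lintegral_congr_ae ?_) (lintegral_condProb_mul hm
    (hb (measurableSet_singleton i)) (measurable_selfInfo.comp (measurable_condProb _)))
  filter_upwards [condProb_le_one hm (b ⁻¹' {i})] with x hx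
  exact entropyTerm_eq_mul_selfInfo hx

lemma lintegral_tsum_condProb_mul (hm : m ≤ mX) (hr : Measurable r) (f : κ → ℝ≥0∞) :
    ∫⁻ x, ∑' j, condProb m μ (r ⁻¹' {j}) x * f j ∂μ = ∫⁻ x, f (r x) ∂μ := by
  rw [lintegral_tsum fun j => ((measurable_condProb' _).mul_const _).aemeasurable,
    lintegral_eq_tsum_setLIntegral_preimage hr fun j _ => f j]
  exact tsum_congr fun j =>
    lintegral_condProb_mul hm (hr (measurableSet_singleton j)) measurable_const

lemma tsum_entropyTerm_condProb_inter_add_one_le (hm : m ≤ mX) (hb : Measurable b)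
    (hr : Measurable r) (ℓ : κ → ℝ≥0) :
    ∀ᵐ x ∂μ, ∑' i, ∑' j, entropyTerm (condProb m μ (b ⁻¹' {i} ∩ r ⁻¹' {j}) x) + 1 ≤
      ∑' i, entropyTerm (condProb m μ (b ⁻¹' {i}) x) +
        ∑' j, condProb m μ (r ⁻¹' {j}) x * ℓ j + kraftSum ℓ := by
  have hrow : ∀ᵐ x ∂μ, ∀ i, ∑' j, condProb m μ (b ⁻¹' {i} ∩ r ⁻¹' {j}) x =
      condProb m μ (b ⁻¹' {i}) x :=
    ae_all_iff.mpr fun i => tsum_condProb_inter_preimage hr (hb (measurableSet_singleton i))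
  have hcol : ∀ᵐ x ∂μ, ∀ j, ∑' i, condProb m μ (b ⁻¹' {i} ∩ r ⁻¹' {j}) x =
      condProb m μ (r ⁻¹' {j}) x := by
    simp only [inter_comm (b ⁻¹' _)]
    exact ae_all_iff.mpr fun j => tsum_condProb_inter_preimage hb (hr (measurableSet_singleton j))
  filter_upwards [hrow, hcol, tsum_condProb_preimage hm hb] with x hrow hcol htotal
  have hGibbs := tsum_entropyTerm_add_one_le
    (fun i j => condProb m μ (b ⁻¹' {i} ∩ r ⁻¹' {j}) x) (by simp only [hrow, htotal]) ℓ
  rw [ENNReal.tsum_comm (f := fun i j => _ * (ℓ j : ℝ≥0∞))] at hGibbs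
  simpa only [ENNReal.tsum_mul_right, hrow, hcol] using hGibbs

lemma labelEnt_prodMk_add_one_le (hm : m ≤ mX) (hb : Measurable b) (hr : Measurable r)
    (ℓ : κ → ℝ≥0) :
    labelEnt m μ (fun x => (b x, r x)) + 1 ≤
      labelEnt m μ b + ∫⁻ x, ℓ (r x) ∂μ + kraftSum ℓ := by
  have hfiber (i : ι) (j : κ) : (fun x => (b x, r x)) ⁻¹' {(i, j)} = b ⁻¹' {i} ∩ r ⁻¹' {j} := by
    ext; simp
  have hmeas (A : Set X) : Measurable fun x => entropyTerm (condProb m μ A x) :=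
    measurable_entropyTerm.comp (measurable_condProb' A)
  rw [labelEnt_eq_lintegral_tsum (hb.prodMk hr), labelEnt_eq_lintegral_tsum hb,
    ← lintegral_tsum_condProb_mul hm hr fun j => ℓ j]
  simp only [ENNReal.tsum_prod', hfiber]
  calc ∫⁻ x, ∑' i, ∑' j, entropyTerm (condProb m μ (b ⁻¹' {i} ∩ r ⁻¹' {j}) x) ∂μ + 1
      = ∫⁻ x, (∑' i, ∑' j, entropyTerm (condProb m μ (b ⁻¹' {i} ∩ r ⁻¹' {j}) x) + 1) ∂μ := by
        rw [lintegral_add_right _ measurable_const, lintegral_const, measure_univ, mul_one]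
    _ ≤ ∫⁻ x, (∑' i, entropyTerm (condProb m μ (b ⁻¹' {i}) x) +
          ∑' j, condProb m μ (r ⁻¹' {j}) x * ℓ j + kraftSum ℓ) ∂μ :=
        lintegral_mono_ae (tsum_entropyTerm_condProb_inter_add_one_le hm hb hr ℓ)
    _ = _ := by
        rw [lintegral_add_right _ measurable_const, lintegral_const, measure_univ, mul_one,
          lintegral_add_left (.tsum fun i => hmeas _)]

lemma labelEnt_pair_add_one_le (hm : m ≤ mX) {b r : X → ℕ} (hb : Measurable b)
    (hr : Measurable r) (ℓ : ℕ → ℝ≥0) :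
    labelEnt m μ (fun x => Nat.pair (b x) (r x)) + 1 ≤
      labelEnt m μ b + ∫⁻ x, ℓ (r x) ∂μ + kraftSum ℓ := by
  refine le_of_eq_of_le ?_ (labelEnt_prodMk_add_one_le hm hb hr ℓ)
  rw [← labelEnt_equiv_comp Nat.pairEquiv]
  rfl

end LabelEnt

section NullAlg

variable {X : Type*} {m M S mX : MeasurableSpace X} {μ : Measure X}

/-- The σ-algebra of the `μ`-null and `μ`-conull sets, so that `m ⊔ nullAlg μ` consists of the
sets that agree with an `m`-measurable set modulo `μ`-null sets. -/
abbrev nullAlg {X : Type*} {_ : MeasurableSpace X} (μ : Measure X) : MeasurableSpace X :=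
  @eventuallyMeasurableSpace X ⊥ (ae μ) _

lemma measurableSet_of_ae_eq (hM : nullAlg μ ≤ M) {s t : Set X}
    (hs : MeasurableSet[M] s) (hts : t =ᵐ[μ] s) : MeasurableSet[M] t := by
  have hnull : MeasurableSet[M] (s ∆ t) :=
    hM _ ⟨∅, @MeasurableSet.empty X ⊥, ae_eq_empty.mpr (measure_symmDiff_eq_zero_iff.mpr hts.symm)⟩
  rw [← symmDiff_symmDiff_cancel_left s t]
  exact hs.symmDiff hnull

lemma measurable_of_ae_eq (hM : nullAlg μ ≤ M) {Y : Type*}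
    [MeasurableSpace Y] {f g : X → Y} (hf : Measurable[M] f) (hgf : g =ᵐ[μ] f) :
    Measurable[M] g := fun _ ht =>
  measurableSet_of_ae_eq (μ := μ) hM (hf ht) (hgf.preimage _)

lemma measurableSet_sup_nullAlg_iff {s : Set X} :
    MeasurableSet[m ⊔ nullAlg μ] s ↔ ∃ t, MeasurableSet[m] t ∧ s =ᵐ[μ] t := by
  refine ⟨fun hs => ?_, fun ⟨t, ht, hst⟩ =>
    measurableSet_of_ae_eq le_sup_right (le_sup_left (a := m) _ ht) hst⟩
  have hle : m ⊔ nullAlg μ ≤ @eventuallyMeasurableSpace X m (ae μ) _ :=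
    sup_le (@le_eventuallyMeasurableSpace X m (ae μ) _)
      fun _ ⟨t, ht, hst⟩ => ⟨t, bot_le (a := m) _ ht, hst⟩
  exact hle _ hs

lemma subsetMod_iff_le_sup_nullAlg :
    SubsetMod m μ {A | MeasurableSet[S] A} ↔ S ≤ m ⊔ nullAlg μ := by
  simp only [SubsetMod, mem_ofPred_eq, measure_symmDiff_eq_zero_iff]
  exact forall₂_congr fun A _ => measurableSet_sup_nullAlg_iff.symm

end NullAlg

section LabelEntLimits

variable {X : Type*} {m mX : MeasurableSpace X} {μ : Measure X}
  [IsProbabilityMeasure μ]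

lemma exists_rank_code (hm : m ≤ mX) {b : X → ℕ} (hb : Measurable b) :
    ∃ r : X → ℕ, Measurable r ∧ ∫⁻ x, logCost (r x) ∂μ ≤ labelEnt m μ b ∧
      ∀ M, m ≤ M → nullAlg μ ≤ M → Measurable[M] r → Measurable[M] b := by
  set q : X → ℕ → ℝ≥0∞ := fun x i => condProb m μ (b ⁻¹' {i}) x
  have hq_meas : Measurable[m] q :=
    @measurable_pi_lambda _ _ _ m _ q fun i => measurable_condProb (b ⁻¹' {i})
  have hq_sum : ∀ᵐ x ∂μ, ∑' i, q x i = 1 := tsum_condProb_preimage hm hb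
  have hq_ne : ∀ᵐ x ∂μ, q x (b x) ≠ 0 := condProb_preimage_apply_ne_zero hm hb
  have hrank : Measurable fun z : (ℕ → ℝ≥0∞) × ℕ => rank z.1 z.2 :=
    measurable_from_prod_countable_left fun i => measurable_rank i
  refine ⟨fun x => rank (q x) (b x), hrank.comp ((hq_meas.mono hm le_rfl).prodMk hb), ?_,
    fun M hmM hM hr => ?_⟩
  · rw [labelEnt_eq_lintegral_selfInfo hm hb]
    refine lintegral_mono_ae ?_
    filter_upwards [hq_sum, hq_ne] with x hsum hne
    exact logCost_rank_le hsum hne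
  · have hqM : Measurable[M] q := hq_meas.mono hmM le_rfl
    refine measurable_to_countable' fun i => measurableSet_of_ae_eq hM
      (s := {x | q x i ≠ 0} ∩ {x | rank (q x) i = rank (q x) (b x)}) ?_ ?_
    · refine MeasurableSet.inter ?_ (measurableSet_eq_fun ((measurable_rank i).comp hqM) hr)
      exact ((measurable_pi_apply i).comp hqM) (measurableSet_singleton 0).compl
    · filter_upwards [hq_sum, hq_ne] with x hsum hne
      refine propext ⟨?_, fun ⟨hi, hrank⟩ => ?_⟩
      · rintro rfl
        exact ⟨hne, rfl⟩
      · exact (injOn_rank (hsum ▸ ENNReal.one_ne_top) hi hne hrank).symm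

lemma lintegral_entropyTerm_condProb_le (hm : m ≤ mX) {A : Set X} (hA : MeasurableSet A)
    (ℓ : ℝ≥0) :
    ∫⁻ x, entropyTerm (condProb m μ A x) ∂μ ≤ μ A * ℓ + ENNReal.ofReal (Real.exp (-ℓ)) := by
  calc ∫⁻ x, entropyTerm (condProb m μ A x) ∂μ
      ≤ ∫⁻ x, (condProb m μ A x * ℓ + ENNReal.ofReal (Real.exp (-ℓ))) ∂μ := by
        refine lintegral_mono_ae ?_
        filter_upwards [condProb_le_one hm A] with x hx
        simpa [selfInfo] using le_self_add.trans (entropyTerm_add_le ℓ hx le_rfl)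
    _ = μ A * ℓ + ENNReal.ofReal (Real.exp (-ℓ)) := by
        rw [lintegral_add_right _ measurable_const, lintegral_const, measure_univ, mul_one,
          lintegral_mul_const _ (measurable_condProb' A), lintegral_condProb hm hA]

variable {ms : ℕ → MeasurableSpace X}

lemma tendsto_condExp_indicator (hmono : Monotone ms) (hle : ∀ n, ms n ≤ mX) {A : Set X}
    (hAms : MeasurableSet[(⨆ n, ms n) ⊔ nullAlg μ] A) :
    ∀ᵐ x ∂μ, Tendsto (fun n => (μ[A.indicator fun _ => (1 : ℝ) | ms n]) x) atTop
      (𝓝 (A.indicator (fun _ => 1) x)) := by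
  obtain ⟨C, hC, hAC⟩ := measurableSet_sup_nullAlg_iff.mp hAms
  have hsup : ⨆ n, ms n ≤ mX := iSup_le hle
  have hind : A.indicator (fun _ => (1 : ℝ)) =ᵐ[μ] C.indicator fun _ => 1 :=
    indicator_ae_eq_of_ae_eq_set hAC
  have hlimit : μ[A.indicator fun _ => (1 : ℝ) | ⨆ n, ms n] =ᵐ[μ] A.indicator fun _ => 1 := by
    refine (condExp_congr_ae hind).trans (.trans (.of_eq ?_) hind.symm)
    exact condExp_of_stronglyMeasurable hsup (stronglyMeasurable_const.indicator hC)
      ((integrable_const 1).indicator (hsup _ hC))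
  filter_upwards [tendsto_ae_condExp (ℱ := ⟨ms, hmono, hle⟩) (A.indicator fun _ => (1 : ℝ)),
    hlimit] with x hx hxA
  rw [← hxA]
  exact hx

lemma tendsto_lintegral_entropyTerm_condProb (hmono : Monotone ms) (hle : ∀ n, ms n ≤ mX)
    {A : Set X} (hA : MeasurableSet A) (hAms : MeasurableSet[(⨆ n, ms n) ⊔ nullAlg μ] A) :
    Tendsto (fun n => ∫⁻ x, entropyTerm (condProb (ms n) μ A x) ∂μ) atTop (𝓝 0) := by
  rw [← lintegral_zero (μ := μ)]
  refine tendsto_lintegral_of_dominated_convergence (fun _ => 1)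
    (fun n => measurable_entropyTerm.comp (measurable_condProb' A))
    (fun n => (condProb_le_one (hle n) A).mono fun x => entropyTerm_le_one) (by simp) ?_
  filter_upwards [tendsto_condExp_indicator hmono hle hAms,
    ae_all_iff.mpr fun n => toReal_condProb (m := ms n) (μ := μ) hA] with x hlim hreal
  have hvalue : Real.negMulLog (A.indicator (fun _ => 1) x) = 0 := by
    by_cases hx : x ∈ A <;> simp [hx]
  simp only [entropyTerm, hreal]
  simpa [hvalue] using
    ENNReal.tendsto_ofReal ((Real.continuous_negMulLog.tendsto _).comp hlim)

lemma tendsto_labelEnt_zero {κ : Type*} [Countable κ] [MeasurableSpace κ]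
    [MeasurableSingletonClass κ] (hmono : Monotone ms) (hle : ∀ n, ms n ≤ mX) {r : X → κ}
    (hr : Measurable r) (hrms : Measurable[(⨆ n, ms n) ⊔ nullAlg μ] r) {ℓ : κ → ℝ≥0}
    (hℓ : kraftSum ℓ ≠ ⊤) (hcost : ∫⁻ x, ℓ (r x) ∂μ ≠ ⊤) :
    Tendsto (fun n => labelEnt (ms n) μ r) atTop (𝓝 0) := by
  have hfiber (j : κ) : MeasurableSet (r ⁻¹' {j}) := hr (measurableSet_singleton j)
  have hdominated := tendsto_lintegral_of_dominated_convergence (μ := Measure.count)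
    (F := fun n j => ∫⁻ x, entropyTerm (condProb (ms n) μ (r ⁻¹' {j}) x) ∂μ) (f := fun _ => 0)
    (fun j => μ (r ⁻¹' {j}) * ℓ j + ENNReal.ofReal (Real.exp (-ℓ j)))
    (fun n => measurable_of_countable _)
    (fun n => .of_forall fun j => lintegral_entropyTerm_condProb_le (hle n) (hfiber j) (ℓ j))
    ?_ (.of_forall fun j => tendsto_lintegral_entropyTerm_condProb hmono hle (hfiber j)
      (hrms (measurableSet_singleton j)))
  · simpa [lintegral_count, labelEnt_eq_tsum_lintegral hr] using hdominated
  · have hbound : ∑' j, μ (r ⁻¹' {j}) * ℓ j = ∫⁻ x, ℓ (r x) ∂μ := by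
      simp [lintegral_eq_tsum_setLIntegral_preimage hr fun j _ => (ℓ j : ℝ≥0∞), mul_comm]
    rw [lintegral_count, ENNReal.tsum_add, hbound]
    exact ENNReal.add_ne_top.mpr ⟨hcost, hℓ⟩

end LabelEntLimits

section JointCode

/-- A single number encoding the first `K` terms of the sequence `w`. -/
def seqCode : ℕ → (ℕ → ℕ) → ℕ
  | 0, _ => 0
  | K + 1, w => Nat.pair (w 0) (seqCode K fun k => w (k + 1))

/-- The `k`-th term of a sequence encoded by `seqCode`. -/
def seqDecode : ℕ → ℕ → ℕ
  | 0, n => n.unpair.1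
  | k + 1, n => seqDecode k n.unpair.2

lemma seqDecode_seqCode {k K : ℕ} (hk : k < K) (w : ℕ → ℕ) : seqDecode k (seqCode K w) = w k := by
  induction k generalizing K w with
  | zero => cases K <;> simp_all [seqCode, seqDecode]
  | succ k ih => cases K <;> simp_all [seqCode, seqDecode]

/-- Uses that `Nat.pair 0 0 = 0`. -/
lemma seqCode_eq_of_le {K L : ℕ} {w : ℕ → ℕ} (hw : ∀ k, K ≤ k → w k = 0) (hKL : K ≤ L) :
    seqCode L w = seqCode K w := by
  induction L generalizing K w with
  | zero => rw [Nat.le_zero.mp hKL]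
  | succ L ih =>
    cases K with
    | zero =>
      have htail : seqCode L (fun k => w (k + 1)) = 0 :=
        ih (K := 0) (fun k _ => hw (k + 1) (Nat.zero_le _)) (Nat.zero_le L)
      change Nat.pair (w 0) (seqCode L fun k => w (k + 1)) = 0
      rw [htail, hw 0 le_rfl]
      rfl
    | succ K =>
      rw [seqCode, seqCode, ih (w := fun k => w (k + 1)) (fun k hk => hw (k + 1) (by lia))
        (Nat.le_of_succ_le_succ hKL)]

lemma logCost_seqCode_le (K : ℕ) (w : ℕ → ℕ) :
    logCost (seqCode K w) ≤ ∑ k ∈ Finset.range K, 2 ^ (k + 1) * logCost (w k) := by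
  induction K generalizing w with
  | zero => simp [seqCode, logCost_zero]
  | succ K ih =>
    calc logCost (seqCode (K + 1) w)
        ≤ 2 * logCost (w 0) + 2 * logCost (seqCode K fun k => w (k + 1)) := logCost_pair_le _ _
      _ ≤ 2 * logCost (w 0) +
            2 * ∑ k ∈ Finset.range K, 2 ^ (k + 1) * logCost (w (k + 1)) := by
          gcongr
          exact ih _
      _ = ∑ k ∈ Finset.range (K + 1), 2 ^ (k + 1) * logCost (w k) := by
          rw [Finset.sum_range_succ', Finset.mul_sum, add_comm]
          simp only [pow_succ, pow_zero]
          congr 1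
          · exact Finset.sum_congr rfl fun k _ => by ring
          · ring

lemma eventually_eq_zero_of_tsum_logCost {w : ℕ → ℕ}
    (hw : ∑' k, (2 ^ (k + 1) * logCost (w k) : ℝ≥0∞) ≠ ⊤) : ∀ᶠ k in atTop, w k = 0 := by
  have hfin := ENNReal.finite_const_le_of_tsum_ne_top hw (ε := logCost 1)
    (by simp [logCost, Real.log_pos])
  rw [← Nat.cofinite_eq_atTop]
  refine hfin.subset fun k hk => ?_
  have hmono : logCost 1 ≤ logCost (w k) := by
    have : 1 ≤ w k := Nat.one_le_iff_ne_zero.mpr hk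
    unfold logCost
    gcongr
  calc (logCost 1 : ℝ≥0∞) ≤ logCost (w k) := ENNReal.coe_le_coe.mpr hmono
    _ ≤ 2 ^ (k + 1) * logCost (w k) := le_mul_of_one_le_left' (one_le_pow₀ one_le_two)

lemma measurable_seqCode {X : Type*} [MeasurableSpace X] (K : ℕ) {r : ℕ → X → ℕ}
    (hr : ∀ k, Measurable (r k)) : Measurable fun x => seqCode K fun k => r k x := by
  induction K generalizing r with
  | zero => exact measurable_const
  | succ K ih =>
    exact (measurable_of_countable (fun p : ℕ × ℕ => Nat.pair p.1 p.2)).comp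
      ((hr 0).prodMk (ih fun k => hr (k + 1)))

lemma exists_limit_seqCode {X : Type*} {mX : MeasurableSpace X} {μ : Measure X}
    {r : ℕ → X → ℕ} (hr : ∀ k, Measurable (r k))
    (hzero : ∀ᵐ x ∂μ, ∀ᶠ k in atTop, r k x = 0) :
    ∃ N : X → ℕ, Measurable N ∧
      ∀ᵐ x ∂μ, ∀ᶠ K in atTop, seqCode K (fun k => r k x) = N x := by
  have hlim : ∀ᵐ x ∂μ, ∃ n, Tendsto (fun K => seqCode K fun k => r k x) atTop (𝓝 n) := by
    filter_upwards [hzero] with x hx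
    obtain ⟨K, hK⟩ := eventually_atTop.mp hx
    exact ⟨_, tendsto_atTop_of_eventually_const fun L hL => seqCode_eq_of_le hK hL⟩
  obtain ⟨N, hN, hNlim⟩ := measurable_limit_of_tendsto_metrizable_ae
    (fun K => (measurable_seqCode K hr).aemeasurable) hlim
  exact ⟨N, hN, hNlim.mono fun x hx => by simpa [nhds_discrete] using hx⟩

lemma exists_joint_code {X : Type*} {mX : MeasurableSpace X} {μ : Measure X} {r : ℕ → X → ℕ}
    (hr : ∀ k, Measurable (r k))
    (hcost : ∑' k, 2 ^ (k + 1) * ∫⁻ x, logCost (r k x) ∂μ ≠ ⊤) :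
    ∃ N : X → ℕ, Measurable N ∧
      ∫⁻ x, logCost (N x) ∂μ ≤ ∑' k, 2 ^ (k + 1) * ∫⁻ x, logCost (r k x) ∂μ ∧
      ∀ M, nullAlg μ ≤ M → Measurable[M] N → ∀ k, Measurable[M] (r k) := by
  have hmeas_cost (k : ℕ) : Measurable fun x => (logCost (r k x) : ℝ≥0∞) :=
    (measurable_of_countable fun n => (logCost n : ℝ≥0∞)).comp (hr k)
  have hintegral : ∫⁻ x, ∑' k, 2 ^ (k + 1) * (logCost (r k x) : ℝ≥0∞) ∂μ =
      ∑' k, 2 ^ (k + 1) * ∫⁻ x, logCost (r k x) ∂μ := by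
    rw [lintegral_tsum fun k => ((hmeas_cost k).const_mul _).aemeasurable]
    exact tsum_congr fun k => lintegral_const_mul _ (hmeas_cost k)
  have hfin : ∀ᵐ x ∂μ, ∑' k, 2 ^ (k + 1) * (logCost (r k x) : ℝ≥0∞) < ⊤ :=
    ae_lt_top (Measurable.tsum fun k => (hmeas_cost k).const_mul _) (hintegral ▸ hcost)
  obtain ⟨N, hN, hcode⟩ := exists_limit_seqCode hr
    (hfin.mono fun x hx => eventually_eq_zero_of_tsum_logCost hx.ne)
  refine ⟨N, hN, ?_, fun M hM hNM k => ?_⟩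
  · rw [← hintegral]
    refine lintegral_mono_ae ?_
    filter_upwards [hcode] with x hx
    obtain ⟨K, hK⟩ := hx.exists
    calc (logCost (N x) : ℝ≥0∞)
        ≤ ∑ k ∈ Finset.range K, 2 ^ (k + 1) * (logCost (r k x) : ℝ≥0∞) := by
          rw [← hK]
          exact_mod_cast logCost_seqCode_le K fun k => r k x
      _ ≤ ∑' k, 2 ^ (k + 1) * (logCost (r k x) : ℝ≥0∞) := ENNReal.sum_le_tsum _
  · refine measurable_of_ae_eq hM (f := seqDecode k ∘ N) (measurable_from_top.comp hNM) ?_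
    filter_upwards [hcode] with x hx
    obtain ⟨K, hkK, hK⟩ := ((eventually_gt_atTop k).and hx).exists
    rw [comp_apply, ← hK, seqDecode_seqCode hkK]

end JointCode

section InvariantAlg

variable {G X : Type*} [Group G] [MulAction G X] {m m' mX : MeasurableSpace X} {μ : Measure X}

lemma invariantAlg_iff_comap_le :
    InvariantAlg G m ↔ ∀ g : G, m.comap (fun x => g • x) ≤ m := by
  refine ⟨?_, fun h g A hA => h g _ ⟨A, hA, rfl⟩⟩
  rintro h g _ ⟨A, hA, rfl⟩
  exact h g A hA

lemma InvariantAlg.sup (hm : InvariantAlg G m) (hm' : InvariantAlg G m') :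
    InvariantAlg G (m ⊔ m') := by
  rw [invariantAlg_iff_comap_le] at *
  exact fun g => MeasurableSpace.comap_sup.le.trans (sup_le_sup (hm g) (hm' g))

lemma invariantAlg_generateFrom {ξ : Set (Set X)}
    (hξ : ∀ g : G, ∀ A ∈ ξ, (fun x => g • x) ⁻¹' A ∈ ξ) :
    InvariantAlg G (MeasurableSpace.generateFrom ξ) := by
  refine invariantAlg_iff_comap_le.mpr fun g => ?_
  rw [MeasurableSpace.comap_generateFrom]
  exact MeasurableSpace.generateFrom_mono (image_subset_iff.mpr (hξ g))

lemma invariantAlg_sigmaG (ξ : Set (Set X)) : InvariantAlg G (sigmaG G ξ) := by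
  refine invariantAlg_generateFrom ?_
  rintro g _ ⟨h, A, hA, rfl⟩
  exact ⟨h * g, A, hA, by simp [preimage_preimage, mul_smul]⟩

lemma invariantAlg_invSigma : InvariantAlg G (invSigma G X) := by
  refine invariantAlg_generateFrom fun g A ⟨hA, hinv⟩ => ?_
  rw [hinv g]
  exact ⟨hA, hinv⟩

lemma invariantAlg_nullAlg
    (hqmp : ∀ g : G, Measure.QuasiMeasurePreserving (fun x => g • x) μ μ) :
    InvariantAlg G (nullAlg μ) := by
  rintro g A ⟨T, hT, hAT⟩
  refine ⟨(fun x => g • x) ⁻¹' T, ?_, (hqmp g).preimage_ae_eq hAT⟩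
  rcases MeasurableSpace.measurableSet_bot_iff.mp hT with rfl | rfl <;> simp

lemma sigmaG_le (hm : InvariantAlg G m) {ξ : Set (Set X)} (hξ : ∀ A ∈ ξ, MeasurableSet[m] A) :
    sigmaG G ξ ≤ m := by
  refine MeasurableSpace.generateFrom_le ?_
  rintro _ ⟨g, A, hA, rfl⟩
  exact hm g A (hξ A hA)

lemma measurable_sigmaG_range_preimage (r : X → ℕ) :
    Measurable[sigmaG G (range fun i => r ⁻¹' {i})] r :=
  @measurable_to_countable' _ _ _ _ (_) _ fun i =>
    MeasurableSpace.measurableSet_generateFrom ⟨1, r ⁻¹' {i}, mem_range_self i, by simp⟩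

lemma invSigma_le : invSigma G X ≤ mX :=
  MeasurableSpace.generateFrom_le fun _ hA => hA.1

end InvariantAlg

section GeneratesOver

variable {G X : Type*} [Group G] [MulAction G X] {F F' S T mX : MeasurableSpace X}
  {μ : Measure X}

lemma IsPartition.exists_label {α : ℕ → Set X} (hα : IsPartition α) :
    ∃ b : X → ℕ, Measurable b ∧ (fun i => b ⁻¹' {i}) = α := by
  obtain ⟨hmeas, hdisj, hcover⟩ := hα
  choose b hb using fun x => mem_iUnion.mp (hcover.symm ▸ mem_univ x)
  have hfiber (i : ℕ) : b ⁻¹' {i} = α i := by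
    ext x
    refine ⟨?_, fun hx => hdisj.eq (not_disjoint_iff.mpr ⟨x, hb x, hx⟩)⟩
    rintro rfl
    exact hb x
  exact ⟨b, measurable_to_countable' fun i => hfiber i ▸ hmeas i, funext hfiber⟩

lemma isPartition_preimage_singleton {b : X → ℕ} (hb : Measurable b) :
    IsPartition fun i => b ⁻¹' {i} :=
  ⟨fun i => hb (measurableSet_singleton i), pairwise_disjoint_fiber b, by
    simp [← preimage_iUnion, iUnion_of_singleton]⟩

/-- The label `r` and its translates generate `S` over `F` and the invariant sets, modulo null
sets. For invariant `F` this says that `S` is contained in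
`sigmaG G (range fun i => r ⁻¹' {i}) ⊔ F ⊔ invSigma G X` up to null sets. -/
def GeneratesOver (G : Type*) {X : Type*} (r : X → ℕ) (S F : MeasurableSpace X) [Group G]
    [MulAction G X] [MeasurableSpace X] (μ : Measure X) : Prop :=
  ∀ M, InvariantAlg G M → nullAlg μ ≤ M → F ⊔ invSigma G X ≤ M → Measurable[M] r → S ≤ M

lemma generatesOver_of_subsetMod {b : X → ℕ}
    (hS : SubsetMod (sigmaG G (range fun i => b ⁻¹' {i}) ⊔ F ⊔ invSigma G X) μ
      {A | MeasurableSet[S] A}) : GeneratesOver G b S F μ := by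
  intro M hMinv hnull hFM hb
  have hfibers : sigmaG G (range fun i => b ⁻¹' {i}) ≤ M :=
    sigmaG_le hMinv (forall_mem_range.mpr fun i => hb (measurableSet_singleton i))
  rw [sup_assoc] at hS
  exact (subsetMod_iff_le_sup_nullAlg.mp hS).trans (sup_le (sup_le hfibers hFM) hnull)

lemma GeneratesOver.of_le_sup_nullAlg {r : X → ℕ} (h : GeneratesOver G r S F μ)
    (hT : T ≤ S ⊔ nullAlg μ) : GeneratesOver G r T F μ :=
  fun M hMinv hnull hFM hr => hT.trans (sup_le (h M hMinv hnull hFM hr) hnull)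

lemma GeneratesOver.pair {b r : X → ℕ} (hb : GeneratesOver G b T F μ)
    (hr : GeneratesOver G r S (T ⊔ F) μ) :
    GeneratesOver G (fun x => Nat.pair (b x) (r x)) S F μ := by
  intro M hMinv hnull hFM hpair
  have hunpair : Measurable[M] fun x => (b x, r x) := by
    simpa [comp_def] using (measurable_of_countable Nat.unpair).comp hpair
  have hTM : T ≤ M := hb M hMinv hnull hFM hunpair.fst
  exact hr M hMinv hnull (sup_assoc T F _ ▸ sup_le hTM hFM) hunpair.snd

lemma outerRokhlinAlg_mono (hST : S ≤ T) :
    outerRokhlinAlg G S F μ ≤ outerRokhlinAlg G T F μ := by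
  refine sInf_le_sInf ?_
  rintro _ ⟨α, hα, hT, rfl⟩
  exact ⟨α, hα, fun A hA => hT A (hST A hA), rfl⟩

lemma outerRokhlinAlg_le_labelEnt
    (hqmp : ∀ g : G, Measure.QuasiMeasurePreserving (fun x => g • x) μ μ)
    (hFinv : InvariantAlg G F) (hFF' : F ≤ F') {r : X → ℕ} (hr : Measurable r)
    (hrS : GeneratesOver G r S F μ) :
    outerRokhlinAlg G S F' μ ≤ labelEnt (F' ⊔ invSigma G X) μ r := by
  refine sInf_le ⟨_, isPartition_preimage_singleton hr, ?_, rfl⟩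
  have hS : S ≤ sigmaG G (range fun i => r ⁻¹' {i}) ⊔ F ⊔ invSigma G X ⊔ nullAlg μ := by
    refine hrS _ ((((invariantAlg_sigmaG _).sup hFinv).sup invariantAlg_invSigma).sup
      (invariantAlg_nullAlg hqmp)) le_sup_right ?_ ?_
    · exact le_sup_of_le_left (sup_le_sup_right le_sup_right _)
    · exact (measurable_sigmaG_range_preimage (G := G) r).mono
        (le_sup_of_le_left (le_sup_of_le_left le_sup_left)) le_rfl
  refine subsetMod_iff_le_sup_nullAlg.mpr (hS.trans ?_)
  exact sup_le_sup_right (sup_le_sup_right (sup_le_sup_left hFF' _) _) _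

variable [IsProbabilityMeasure μ]

lemma exists_generatesOver_lintegral_logCost_lt (hF : F ≤ mX) {c : ℝ≥0∞}
    (hc : outerRokhlinAlg G S F μ < c) :
    ∃ r : X → ℕ, Measurable r ∧ ∫⁻ x, logCost (r x) ∂μ < c ∧ GeneratesOver G r S F μ := by
  obtain ⟨_, ⟨α, hα, hS, rfl⟩, hαc⟩ := sInf_lt_iff.mp hc
  obtain ⟨b, hb, rfl⟩ := hα.exists_label
  obtain ⟨r, hr, hcost, hdecode⟩ :=
    exists_rank_code (μ := μ) (sup_le hF (invSigma_le (G := G))) hb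
  exact ⟨r, hr, hcost.trans_lt hαc, fun M hMinv hnull hFM hrM =>
    generatesOver_of_subsetMod hS M hMinv hnull hFM (hdecode M hFM hnull hrM)⟩

lemma outerRokhlinAlg_add_one_le_of_generatesOver
    (hqmp : ∀ g : G, Measure.QuasiMeasurePreserving (fun x => g • x) μ μ)
    (hF : F ≤ mX) (hFinv : InvariantAlg G F) {r : X → ℕ} (hr : Measurable r)
    (hrS : GeneratesOver G r S (T ⊔ F) μ) (ℓ : ℕ → ℝ≥0) :
    outerRokhlinAlg G S F μ + 1 ≤
      outerRokhlinAlg G T F μ + (∫⁻ x, ℓ (r x) ∂μ + kraftSum ℓ) := by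
  rw [outerRokhlinAlg.eq_def (S := T), outerRokhlin, ENNReal.sInf_add]
  refine le_iInf₂ ?_
  rintro _ ⟨α, hα, hT, rfl⟩
  obtain ⟨b, hb, rfl⟩ := hα.exists_label
  have hpair : Measurable fun x => Nat.pair (b x) (r x) :=
    (measurable_of_countable fun p : ℕ × ℕ => Nat.pair p.1 p.2).comp (hb.prodMk hr)
  calc outerRokhlinAlg G S F μ + 1
      ≤ labelEnt (F ⊔ invSigma G X) μ (fun x => Nat.pair (b x) (r x)) + 1 := by
        gcongr
        exact outerRokhlinAlg_le_labelEnt hqmp hFinv le_rfl hpair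
          ((generatesOver_of_subsetMod hT).pair hrS)
    _ ≤ labelEnt (F ⊔ invSigma G X) μ b + (∫⁻ x, ℓ (r x) ∂μ + kraftSum ℓ) :=
        (labelEnt_pair_add_one_le (sup_le hF invSigma_le) hb hr ℓ).trans_eq (add_assoc _ _ _)

end GeneratesOver

section InverseLimit

variable {G X : Type*} [Group G] [MulAction G X] {F mX : MeasurableSpace X} {μ : Measure X}
  {B : ℕ → MeasurableSpace X}

lemma lintegral_natCast_mul_logCost {r : X → ℕ} (hr : Measurable r) (s : ℕ) :
    ∫⁻ x, ((s * logCost (r x) : ℝ≥0) : ℝ≥0∞) ∂μ = s * ∫⁻ x, logCost (r x) ∂μ := by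
  push_cast
  exact lintegral_const_mul _ ((measurable_of_countable fun n => (logCost n : ℝ≥0∞)).comp hr)

lemma exists_forall_outerRokhlinAlg_lt
    (hzero : (⨅ n, ⨆ m, ⨆ _ : n ≤ m, outerRokhlinAlg G (B m) (B n ⊔ F) μ) = 0)
    {ε : ℝ≥0∞} (hε : ε ≠ 0) :
    ∃ n, ∀ m, n ≤ m → outerRokhlinAlg G (B m) (B n ⊔ F) μ < ε := by
  obtain ⟨n, hn⟩ := iInf_lt_iff.mp (hzero.trans_lt (pos_iff_ne_zero.mpr hε))
  exact ⟨n, fun m hm =>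
    (le_iSup₂ (f := fun m (_ : n ≤ m) => outerRokhlinAlg G (B m) (B n ⊔ F) μ) m hm).trans_lt hn⟩

lemma generatesOver_iSup {n : ℕ → ℕ} {r : ℕ → X → ℕ} {N : X → ℕ} (hmono : Monotone B)
    (hr : ∀ k, GeneratesOver G (r k) (B (k + n (k + 1))) (B (n k) ⊔ F) μ)
    (hN : ∀ M, nullAlg μ ≤ M → Measurable[M] N → ∀ k, Measurable[M] (r k)) :
    GeneratesOver G N (⨆ k, B k) (B (n 0) ⊔ F) μ := by
  intro M hMinv hnull hFM hNM
  rw [sup_assoc, sup_le_iff] at hFM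
  have hstep (k : ℕ) (hk : B (n k) ≤ M) : B (k + n (k + 1)) ≤ M :=
    hr k M hMinv hnull (sup_assoc (B (n k)) F _ ▸ sup_le hk hFM.2) (hN M hnull hNM k)
  have hBn (k : ℕ) : B (n k) ≤ M := by
    induction k with
    | zero => exact hFM.1
    | succ k ih => exact (hmono (Nat.le_add_left _ _)).trans (hstep k ih)
  exact iSup_le fun k => (hmono (Nat.le_add_right _ _)).trans (hstep k (hBn k))

variable [IsProbabilityMeasure μ]

lemma exists_outerRokhlinAlg_sup_lt
    (hqmp : ∀ g : G, Measure.QuasiMeasurePreserving (fun x => g • x) μ μ)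
    (hF : F ≤ mX) (hFinv : InvariantAlg G F) (hmono : Monotone B) (hle : ∀ n, B n ≤ mX)
    (hgen : mX ≤ (⨆ n, B n) ⊔ nullAlg μ) (hfin : rokhlin G F μ < ⊤) {ε : ℝ≥0∞} (hε : ε ≠ 0) :
    ∃ n, outerRokhlinAlg G mX (B n ⊔ F) μ < ε := by
  obtain ⟨r, hr, hcost, hrgen⟩ := exists_generatesOver_lintegral_logCost_lt hF hfin
  obtain ⟨s, hs⟩ := exists_kraftSum_mul_logCost_le one_ne_zero
  have hms : mX ≤ (⨆ n, B n ⊔ F ⊔ invSigma G X) ⊔ nullAlg μ :=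
    hgen.trans (sup_le_sup_right (iSup_mono fun n => le_sup_of_le_left le_sup_left) _)
  have hlim : Tendsto (fun n => labelEnt (B n ⊔ F ⊔ invSigma G X) μ r) atTop (𝓝 0) := by
    refine tendsto_labelEnt_zero
      (fun i j hij => sup_le_sup_right (sup_le_sup_right (hmono hij) F) _)
      (fun n => sup_le (sup_le (hle n) hF) invSigma_le) hr (hr.mono hms le_rfl)
      (ne_top_of_le_ne_top (by simp) hs) ?_
    rw [lintegral_natCast_mul_logCost hr]
    exact ENNReal.mul_ne_top (by simp) hcost.ne
  obtain ⟨n, hn⟩ := (hlim.eventually_lt_const (pos_iff_ne_zero.mpr hε)).exists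
  exact ⟨n, (outerRokhlinAlg_le_labelEnt hqmp hFinv le_sup_right hr hrgen).trans_lt hn⟩

lemma rokhlin_le_iSup_outerRokhlinAlg
    (hqmp : ∀ g : G, Measure.QuasiMeasurePreserving (fun x => g • x) μ μ)
    (hF : F ≤ mX) (hFinv : InvariantAlg G F) (hmono : Monotone B) (hle : ∀ n, B n ≤ mX)
    (hgen : mX ≤ (⨆ n, B n) ⊔ nullAlg μ) (hfin : rokhlin G F μ < ⊤) :
    rokhlin G F μ ≤ ⨆ m, outerRokhlinAlg G (B m) F μ := by
  refine ENNReal.le_of_forall_pos_le_add fun ε hε _ => ?_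
  have hε2 : (ε / 2 : ℝ≥0∞) ≠ 0 := by simp [hε.ne']
  obtain ⟨s, hs⟩ := exists_kraftSum_mul_logCost_le hε2
  obtain ⟨n, hn⟩ := exists_outerRokhlinAlg_sup_lt hqmp hF hFinv hmono hle hgen hfin
    (ENNReal.div_ne_zero.mpr ⟨hε2, ENNReal.natCast_ne_top s⟩)
  obtain ⟨r, hr, hcost, hrgen⟩ := exists_generatesOver_lintegral_logCost_lt (sup_le (hle n) hF) hn
  have hscost : ∫⁻ x, ((s * logCost (r x) : ℝ≥0) : ℝ≥0∞) ∂μ ≤ ε / 2 := by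
    rw [lintegral_natCast_mul_logCost hr]
    exact (mul_le_mul_right hcost.le _).trans ENNReal.mul_div_le
  refine (ENNReal.add_le_add_iff_right ENNReal.one_ne_top).mp ?_
  calc rokhlin G F μ + 1
      ≤ outerRokhlinAlg G (B n) F μ + (∫⁻ x, ((s * logCost (r x) : ℝ≥0) : ℝ≥0∞) ∂μ +
          kraftSum fun j => s * logCost j) :=
        outerRokhlinAlg_add_one_le_of_generatesOver hqmp hF hFinv hr hrgen fun j => s * logCost j
    _ ≤ (⨆ m, outerRokhlinAlg G (B m) F μ) + (ε / 2 + (1 + ε / 2)) := by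
        gcongr
        exact le_iSup (fun m => outerRokhlinAlg G (B m) F μ) n
    _ = (⨆ m, outerRokhlinAlg G (B m) F μ) + (ε / 2 + ε / 2) + 1 := by ring
    _ = (⨆ m, outerRokhlinAlg G (B m) F μ) + ε + 1 := by rw [ENNReal.add_halves]

lemma exists_generatesOver_iSup (hF : F ≤ mX) (hmono : Monotone B) (hle : ∀ n, B n ≤ mX)
    (hzero : (⨅ n, ⨆ m, ⨆ _ : n ≤ m, outerRokhlinAlg G (B m) (B n ⊔ F) μ) = 0) :
    ∃ (n : ℕ) (N : X → ℕ), Measurable N ∧ ∫⁻ x, logCost (N x) ∂μ ≠ ⊤ ∧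
      GeneratesOver G N (⨆ k, B k) (B n ⊔ F) μ := by
  obtain ⟨ε, hε, hεsum⟩ := ENNReal.exists_pos_sum_of_countable' one_ne_zero ℕ
  have hδ (k : ℕ) : ε k / 2 ^ (k + 1) ≠ 0 :=
    ENNReal.div_ne_zero.mpr ⟨(hε k).ne', ENNReal.pow_ne_top ENNReal.ofNat_ne_top⟩
  choose n hn using fun k => exists_forall_outerRokhlinAlg_lt hzero (hδ k)
  choose r hr hcost hrgen using fun k => exists_generatesOver_lintegral_logCost_lt
    (sup_le (hle (n k)) hF) (hn k (k + n k + n (k + 1)) (by lia))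
  have hsum : ∑' k, 2 ^ (k + 1) * ∫⁻ x, logCost (r k x) ∂μ ≤ ∑' k, ε k :=
    ENNReal.tsum_le_tsum fun k => (mul_le_mul_right (hcost k).le _).trans ENNReal.mul_div_le
  have hsum_ne_top := ne_top_of_lt (hsum.trans_lt hεsum)
  obtain ⟨N, hN, hNcost, hdecode⟩ := exists_joint_code hr hsum_ne_top
  refine ⟨n 0, N, hN, ne_top_of_le_ne_top hsum_ne_top hNcost, generatesOver_iSup hmono ?_ hdecode⟩
  exact fun k => (hrgen k).of_le_sup_nullAlg (le_sup_of_le_left (hmono (by lia)))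

lemma rokhlin_lt_top
    (hqmp : ∀ g : G, Measure.QuasiMeasurePreserving (fun x => g • x) μ μ)
    (hF : F ≤ mX) (hFinv : InvariantAlg G F) (hmono : Monotone B) (hle : ∀ n, B n ≤ mX)
    (hgen : mX ≤ (⨆ n, B n) ⊔ nullAlg μ)
    (hzero : (⨅ n, ⨆ m, ⨆ _ : n ≤ m, outerRokhlinAlg G (B m) (B n ⊔ F) μ) = 0)
    (hfin : ∀ m, outerRokhlinAlg G (B m) F μ < ⊤) : rokhlin G F μ < ⊤ := by
  obtain ⟨n, N, hN, hcost, hNgen⟩ := exists_generatesOver_iSup hF hmono hle hzero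
  obtain ⟨s, hs⟩ := exists_kraftSum_mul_logCost_le one_ne_zero
  have hbound := outerRokhlinAlg_add_one_le_of_generatesOver hqmp hF hFinv hN
    (hNgen.of_le_sup_nullAlg hgen) fun j => s * logCost j
  rw [lintegral_natCast_mul_logCost hN] at hbound
  refine (le_self_add.trans hbound).trans_lt (ENNReal.add_lt_top.mpr ⟨hfin n, ?_⟩)
  exact ENNReal.add_lt_top.mpr ⟨ENNReal.mul_lt_top (by simp) hcost.lt_top, hs.trans_lt (by simp)⟩

end InverseLimit

theorem statement15_general {G X : Type*} [Group G] [MulAction G X] {F mX : MeasurableSpace X}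
    {μ : Measure X} [IsProbabilityMeasure μ]
    (hqmp : ∀ g : G, Measure.QuasiMeasurePreserving (fun x => g • x) μ μ)
    (hF : F ≤ mX) (hFinv : InvariantAlg G F) {B : ℕ → MeasurableSpace X} (hmono : Monotone B)
    (hle : ∀ n, B n ≤ mX) (hgen : SubsetMod (⨆ n, B n) μ {A | MeasurableSet A}) :
    (rokhlin G F μ < ⊤ ↔
        ((⨅ n, ⨆ m, ⨆ _ : n ≤ m, outerRokhlinAlg G (B m) (B n ⊔ F) μ) = 0 ∧
          ∀ m, outerRokhlinAlg G (B m) F μ < ⊤)) ∧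
      (rokhlin G F μ < ⊤ →
        rokhlin G F μ = ⨆ m, outerRokhlinAlg G (B m) F μ) := by
  have hgen' : mX ≤ (⨆ n, B n) ⊔ nullAlg μ := subsetMod_iff_le_sup_nullAlg.mp hgen
  have hB_le (m : ℕ) : outerRokhlinAlg G (B m) F μ ≤ rokhlin G F μ := outerRokhlinAlg_mono (hle m)
  refine ⟨⟨fun hfin => ⟨?_, fun m => (hB_le m).trans_lt hfin⟩, fun ⟨hzero, hfin⟩ =>
    rokhlin_lt_top hqmp hF hFinv hmono hle hgen' hzero hfin⟩, fun hfin => ?_⟩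
  · by_contra hne
    obtain ⟨n, hn⟩ := exists_outerRokhlinAlg_sup_lt hqmp hF hFinv hmono hle hgen' hfin hne
    exact hn.not_ge <| (iInf_le _ n).trans <| iSup₂_le fun m _ => outerRokhlinAlg_mono (hle m)
  · exact (rokhlin_le_iSup_outerRokhlinAlg hqmp hF hFinv hmono hle hgen' hfin).antisymm
      (iSup_le hB_le)

/-- Theorem 6.3, inverse limit formula: for an increasing sequence of
invariant sub-σ-algebras `B n` generating the Borel σ-algebra mod `μ`-null sets,
finiteness of `rh_G(X,μ|F)` is characterized, and in the finite case
`rh_G(X,μ|F) = sup_m rh_{G,μ}(B m | F)`. -/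
theorem statement15 {G X : Type*} (F : MeasurableSpace X) [Group G] [Countable G]
    [mX : MeasurableSpace X] [StandardBorelSpace X] [MulAction G X]
    (μ : Measure X) [IsProbabilityMeasure μ] (hpmp : IsPmp G μ)
    (hF : F ≤ mX) (hFinv : InvariantAlg G F)
    (B : ℕ → MeasurableSpace X) (hmono : Monotone B) (hle : ∀ n, B n ≤ mX)
    (hinv : ∀ n, InvariantAlg G (B n))
    (hgen : ∀ A : Set X, MeasurableSet A →
      ∃ C, MeasurableSet[⨆ n, B n] C ∧ μ (A ∆ C) = 0) :
    (rokhlin G F μ < ⊤ ↔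
        ((⨅ n, ⨆ m, ⨆ _ : n ≤ m, outerRokhlinAlg G (B m) (B n ⊔ F) μ) = 0 ∧
          ∀ m, outerRokhlinAlg G (B m) F μ < ⊤)) ∧
      (rokhlin G F μ < ⊤ →
        rokhlin G F μ = ⨆ m, outerRokhlinAlg G (B m) F μ) :=
  statement15_general (fun g => (hpmp g).quasiMeasurePreserving) hF hFinv hmono hle hgen
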